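/- arXiv:2408.08668 — 2 statements merged into one kernel-verified Lean document; each statement's English description precedes it below -/
import Mathlib

section
/- For every c ∈ ℝ, σ > 0, and α ∈ (0,1), writing q_α := VaR_α(N(c, σ²)), the tail expectation of the Gaussian measure N(c, σ²) equals the integral of its quantile function over upper levels: ∫_{[q_α, ∞)} x dN(c,σ²)(x) = ∫_α^1 VaR_y(N(c, σ²)) dy. Consequently, since N(c,σ²)([q_α, ∞)) = 1 − α, the conditional expectation of the Gaussian above its α-quantile equals (1/(1−α)) · ∫_α^1 VaR_y(N(c, σ²)) dy. -/
open MeasureTheory ProbabilityTheory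

/-- The `α`-level Value-at-Risk (the `α`-quantile) of a measure on `ℝ`. -/
noncomputable def VaR (μ : Measure ℝ) (α : ℝ) : ℝ :=
  sInf {z : ℝ | α ≤ cdf μ z}

lemma VaR_le_iff (μ : Measure ℝ) {y : ℝ} (hy : y ∈ Set.Ioo (0 : ℝ) 1) (x : ℝ) :
    VaR μ y ≤ x ↔ y ≤ cdf μ x := by
  have hbdd : BddBelow {z : ℝ | y ≤ cdf μ z} := by
    obtain ⟨b, hb⟩ := ((tendsto_cdf_atBot μ).eventually (gt_mem_nhds hy.1)).exists
    refine ⟨b, fun z hz => ?_⟩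
    by_contra! h
    have h2 := monotone_cdf μ h.le
    have h3 : y ≤ cdf μ z := hz
    linarith
  have hne : {z : ℝ | y ≤ cdf μ z}.Nonempty := by
    obtain ⟨b, hb⟩ := ((tendsto_cdf_atTop μ).eventually (lt_mem_nhds hy.2)).exists
    exact ⟨b, hb.le⟩
  constructor
  · intro h
    have hc : Filter.Tendsto (cdf μ) (nhdsWithin x (Set.Ioi x)) (nhds (cdf μ x)) :=
      ((cdf μ).right_continuous x).mono_left (nhdsWithin_mono _ Set.Ioi_subset_Ici_self)
    refine ge_of_tendsto hc ?_
    filter_upwards [self_mem_nhdsWithin] with w hw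
    obtain ⟨z, hz, hzw⟩ := exists_lt_of_csInf_lt hne (lt_of_le_of_lt h hw)
    exact le_trans hz (monotone_cdf μ hzw.le)
  · intro h
    exact csInf_le hbdd h

lemma cdf_VaR (μ : Measure ℝ) [IsProbabilityMeasure μ] (h0 : ∀ x, μ {x} = 0)
    {y : ℝ} (hy : y ∈ Set.Ioo (0 : ℝ) 1) : cdf μ (VaR μ y) = y := by
  apply le_antisymm
  · have h1 : (cdf μ).measure {VaR μ y} = 0 := by rw [measure_cdf]; exact h0 _
    rw [StieltjesFunction.measure_singleton, ENNReal.ofReal_eq_zero] at h1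
    have h2 : Function.leftLim (cdf μ) (VaR μ y) ≤ y := by
      refine le_of_tendsto ((monotone_cdf μ).tendsto_leftLim _) ?_
      filter_upwards [self_mem_nhdsWithin] with w hw
      by_contra! h
      exact absurd ((VaR_le_iff μ hy w).2 h.le) (not_le.2 hw)
    linarith
  · exact (VaR_le_iff μ hy _).1 le_rfl

lemma aemeas_VaR (μ : Measure ℝ) {α : ℝ} (hα : α ∈ Set.Ioo (0 : ℝ) 1) :
    AEMeasurable (VaR μ) (volume.restrict (Set.Ioo α 1)) := by
  refine aemeasurable_restrict_of_monotoneOn measurableSet_Ioo ?_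
  intro a ha b hb hab
  have ha' : a ∈ Set.Ioo (0 : ℝ) 1 := ⟨hα.1.trans ha.1, ha.2⟩
  have hb' : b ∈ Set.Ioo (0 : ℝ) 1 := ⟨hα.1.trans hb.1, hb.2⟩
  exact (VaR_le_iff μ ha' _).2 (hab.trans ((VaR_le_iff μ hb' _).1 le_rfl))

lemma map_VaR (μ : Measure ℝ) [IsProbabilityMeasure μ] (h0 : ∀ x, μ {x} = 0)
    {α : ℝ} (hα : α ∈ Set.Ioo (0 : ℝ) 1) :
    (volume.restrict (Set.Ioo α 1)).map (VaR μ) = μ.restrict (Set.Ici (VaR μ α)) := by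
  have hm := aemeas_VaR μ hα
  have : IsFiniteMeasure ((volume.restrict (Set.Ioo α 1)).map (VaR μ)) :=
    Measure.isFiniteMeasure_map _ _
  have : NullSingletonClass μ := ⟨h0⟩
  refine Measure.ext_of_Iic _ _ fun x => ?_
  rw [Measure.map_apply_of_aemeasurable hm measurableSet_Iic,
    Measure.restrict_apply measurableSet_Iic,
    Measure.restrict_apply' measurableSet_Ioo]
  have e1 : VaR μ ⁻¹' Set.Iic x ∩ Set.Ioo α 1 = Set.Iic (cdf μ x) ∩ Set.Ioo α 1 := by
    ext y
    simp only [Set.mem_inter_iff, Set.mem_preimage, Set.mem_Iic]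
    refine and_congr_left fun hy => VaR_le_iff μ ⟨hα.1.trans hy.1, hy.2⟩ x
  have e2 : volume (Set.Iic (cdf μ x) ∩ Set.Ioo α 1) = ENNReal.ofReal (cdf μ x - α) := by
    rw [← Real.volume_Ioc]
    have : Set.Iic (cdf μ x) ∩ Set.Ioc α 1 = Set.Ioc α (cdf μ x) := by
      ext y
      have := cdf_le_one μ x
      simp only [Set.mem_inter_iff, Set.mem_Iic, Set.mem_Ioc]
      constructor
      · rintro ⟨a, b, c⟩; exact ⟨b, a⟩
      · rintro ⟨a, b⟩; exact ⟨b, a, b.trans this⟩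
    rw [← this]
    exact measure_congr ((Filter.EventuallyEq.refl _ _).inter Ioo_ae_eq_Ioc)
  have e3 : μ (Set.Iic x ∩ Set.Ici (VaR μ α)) = ENNReal.ofReal (cdf μ x - α) := by
    rw [Set.inter_comm, Set.Ici_inter_Iic, ← measure_congr (Ioc_ae_eq_Icc (μ := μ))]
    conv_lhs => rw [← measure_cdf μ]
    rw [StieltjesFunction.measure_Ioc, measure_cdf, cdf_VaR μ h0 hα]
  rw [e1, e2, e3]

/-- The Gaussian tail expectation above the `α`-quantile equals the integral of the
quantile function over upper levels; the tail has probability `1 - α`; and consequently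
the conditional expectation above the quantile equals `(1/(1-α)) ∫_α^1 VaR_y dy`. -/
theorem tail_expectation_gaussian (c σ : ℝ) (hσ : 0 < σ) (α : ℝ)
    (hα : α ∈ Set.Ioo (0 : ℝ) 1) :
    (∫ x in Set.Ici (VaR (gaussianReal c ⟨σ ^ 2, by positivity⟩) α), x
        ∂(gaussianReal c ⟨σ ^ 2, by positivity⟩))
      = (∫ y in α..1, VaR (gaussianReal c ⟨σ ^ 2, by positivity⟩) y)
    ∧ gaussianReal c ⟨σ ^ 2, by positivity⟩
        (Set.Ici (VaR (gaussianReal c ⟨σ ^ 2, by positivity⟩) α)) = ENNReal.ofReal (1 - α)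
    ∧ (∫ x in Set.Ici (VaR (gaussianReal c ⟨σ ^ 2, by positivity⟩) α), x
          ∂(gaussianReal c ⟨σ ^ 2, by positivity⟩))
        / (gaussianReal c ⟨σ ^ 2, by positivity⟩
            (Set.Ici (VaR (gaussianReal c ⟨σ ^ 2, by positivity⟩) α))).toReal
      = (1 / (1 - α)) * ∫ y in α..1, VaR (gaussianReal c ⟨σ ^ 2, by positivity⟩) y := by
  have hv : (⟨σ ^ 2, by positivity⟩ : NNReal) ≠ 0 := by
    intro h
    have := congrArg NNReal.toReal h
    have h2 : σ ^ 2 = 0 := this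
    exact (pow_pos hσ 2).ne' h2
  have hp : IsProbabilityMeasure (gaussianReal c ⟨σ ^ 2, by positivity⟩) :=
    instIsProbabilityMeasureGaussianReal _ _
  have h0 : ∀ x, gaussianReal c ⟨σ ^ 2, by positivity⟩ {x} = 0 :=
    (nullSingletonClass_gaussianReal hv).measure_singleton
  generalize gaussianReal c ⟨σ ^ 2, _⟩ = μ at h0 hp ⊢
  have hmap := map_VaR μ h0 hα
  have hm := aemeas_VaR μ hα
  have A : (∫ x in Set.Ici (VaR μ α), x ∂μ) = ∫ y in α..1, VaR μ y := by
    rw [← hmap, integral_map (f := fun x : ℝ => x) hm aestronglyMeasurable_id,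
      intervalIntegral.integral_of_le hα.2.le, integral_Ioc_eq_integral_Ioo]
  have B : μ (Set.Ici (VaR μ α)) = ENNReal.ofReal (1 - α) := by
    have := congrArg (fun ν : Measure ℝ => ν Set.univ) hmap
    simp only [Measure.map_apply_of_aemeasurable hm MeasurableSet.univ, Set.preimage_univ,
      Measure.restrict_apply_univ, Real.volume_Ioo] at this
    exact this.symm
  refine ⟨A, B, ?_⟩
  rw [A, B, ENNReal.toReal_ofReal (by linarith [hα.2])]
  ring
end

section
/- For every c ∈ ℝ, σ > 0, and α ∈ (0,1), the Rockafellar–Uryasev infimum for the Gaussian measure N(c, σ²) satisfies ⨅_{z ∈ ℝ} ( z + (1/(1−α)) · ∫ max(x − z, 0) dN(c,σ²)(x) ) = c + σ · φ(VaR_α(N(0,1)))/(1−α), where φ(x) = (2π)^{-1/2}·exp(−x²/2); moreover the infimum is attained at z = VaR_α(N(c, σ²)) = c + σ · VaR_α(N(0,1)). -/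
open MeasureTheory ProbabilityTheory

/-- The standard normal probability density function `φ(x) = (2π)^{-1/2} exp(-x²/2)`. -/
noncomputable def stdNormalPDF (x : ℝ) : ℝ :=
  (Real.sqrt (2 * Real.pi))⁻¹ * Real.exp (-(x ^ 2) / 2)

lemma ru_cdf_cont : Continuous (cdf (gaussianReal 0 1)) := by
  haveI := nullSingletonClass_gaussianReal (μ := 0) (v := 1) one_ne_zero
  rw [continuous_iff_continuousAt]
  intro a
  rw [(cdf (gaussianReal 0 1)).mono.continuousAt_iff_leftLim_eq_rightLim,
    StieltjesFunction.rightLim_eq]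
  have h := StieltjesFunction.measure_singleton (cdf (gaussianReal 0 1)) a
  rw [measure_cdf, measure_singleton] at h
  have h2 := ENNReal.ofReal_eq_zero.1 h.symm
  have h3 := (cdf (gaussianReal 0 1)).mono.leftLim_le (le_refl a)
  linarith

lemma ru_set (α : ℝ) (hα : α ∈ Set.Ioo (0 : ℝ) 1) :
    {z : ℝ | α ≤ cdf (gaussianReal 0 1) z}.Nonempty ∧
    BddBelow {z : ℝ | α ≤ cdf (gaussianReal 0 1) z} := by
  constructor
  · obtain ⟨z, hz⟩ := ((tendsto_cdf_atTop (gaussianReal 0 1)).eventually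
      (lt_mem_nhds hα.2)).exists
    exact ⟨z, hz.le⟩
  · obtain ⟨z, hz⟩ := ((tendsto_cdf_atBot (gaussianReal 0 1)).eventually
      (gt_mem_nhds hα.1)).exists
    refine ⟨z, fun y hy => ?_⟩
    by_contra hlt
    have := monotone_cdf (gaussianReal 0 1) (not_le.1 hlt).le
    have hy' : α ≤ cdf (gaussianReal 0 1) y := hy
    linarith

lemma ru_cdf_VaR (α : ℝ) (hα : α ∈ Set.Ioo (0 : ℝ) 1) :
    cdf (gaussianReal 0 1) (VaR (gaussianReal 0 1) α) = α := by
  obtain ⟨hn, hb⟩ := ru_set α hα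
  apply le_antisymm
  · have ht : Filter.Tendsto (cdf (gaussianReal 0 1))
        (nhdsWithin (VaR (gaussianReal 0 1) α) (Set.Iio (VaR (gaussianReal 0 1) α)))
        (nhds (cdf (gaussianReal 0 1) (VaR (gaussianReal 0 1) α))) :=
      ru_cdf_cont.continuousAt.tendsto.mono_left nhdsWithin_le_nhds
    refine le_of_tendsto ht ?_
    filter_upwards [self_mem_nhdsWithin] with z hz
    by_contra hlt
    exact absurd (csInf_le hb (not_le.1 hlt).le) (not_le.2 hz)
  · exact IsClosed.csInf_mem (isClosed_le continuous_const ru_cdf_cont) hn hb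

lemma ru_tail (q : ℝ) :
    ∫ x in Set.Ioi q, x ∂(gaussianReal 0 1) = stdNormalPDF q := by
  have hpdf : ∀ x, gaussianPDFReal 0 1 x = stdNormalPDF x := by
    intro x
    simp [gaussianPDFReal, stdNormalPDF]
  have hd : ∀ x, HasDerivAt (fun y => - stdNormalPDF y) (stdNormalPDF x * x) x := by
    intro x
    have h1 : HasDerivAt (fun y : ℝ => -(y ^ 2) / 2) (-x) x := by
      exact (((hasDerivAt_pow 2 x).neg).div_const 2).congr_deriv (by norm_num; ring)
    have h2 := ((h1.exp).const_mul (Real.sqrt (2 * Real.pi))⁻¹).neg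
    refine h2.congr_deriv ?_
    unfold stdNormalPDF
    ring
  have hint : Integrable (fun x => stdNormalPDF x * x) := by
    have := (integrable_mul_exp_neg_mul_sq (b := 1/2) (by norm_num)).const_mul
      (Real.sqrt (2 * Real.pi))⁻¹
    refine this.congr (Filter.Eventually.of_forall fun x => ?_)
    simp only [stdNormalPDF]
    rw [show -(1/2) * x ^ 2 = -(x^2)/2 by ring]
    ring
  have hlim : Filter.Tendsto (fun y => - stdNormalPDF y) Filter.atTop (nhds 0) := by
    have h1 : Filter.Tendsto (fun y : ℝ => -(y ^ 2) / 2) Filter.atTop Filter.atBot := by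
      have : Filter.Tendsto (fun y : ℝ => y ^ 2 / 2) Filter.atTop Filter.atTop :=
        (Filter.tendsto_pow_atTop two_ne_zero).atTop_div_const (by norm_num)
      refine (Filter.tendsto_neg_atTop_atBot.comp this).congr fun y => ?_
      simp only [Function.comp]; ring
    have h2 := ((Real.tendsto_exp_atBot.comp h1).const_mul (Real.sqrt (2 * Real.pi))⁻¹).neg
    rw [mul_zero, neg_zero] at h2
    exact h2
  rw [← integral_indicator measurableSet_Ioi,
    integral_gaussianReal_eq_integral_smul one_ne_zero]
  have : (fun x => gaussianPDFReal 0 1 x • (Set.Ioi q).indicator (fun x => x) x)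
      = (Set.Ioi q).indicator (fun x => stdNormalPDF x * x) := by
    ext x
    by_cases hx : x ∈ Set.Ioi q <;> simp [hx, hpdf]
  rw [this, integral_indicator measurableSet_Ioi,
    integral_Ioi_of_hasDerivAt_of_tendsto' (fun x _ => hd x) hint.integrableOn hlim]
  ring

lemma ru_int_id : Integrable (fun x : ℝ => x) (gaussianReal 0 1) :=
  (memLp_id_gaussianReal' 1 (by simp)).integrable le_rfl

lemma ru_int_max (z : ℝ) : Integrable (fun x : ℝ => max (x - z) 0) (gaussianReal 0 1) :=
  (ru_int_id.sub (integrable_const z)).pos_part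

lemma ru_tail2 (α : ℝ) (hα : α ∈ Set.Ioo (0 : ℝ) 1) (z : ℝ) :
    ∫ x in Set.Ioi (VaR (gaussianReal 0 1) α), (x - z) ∂(gaussianReal 0 1)
      = stdNormalPDF (VaR (gaussianReal 0 1) α) - z * (1 - α) := by
  rw [integral_sub ru_int_id.integrableOn (integrable_const z), ru_tail, setIntegral_const]
  have h := ru_cdf_VaR α hα
  rw [cdf_eq_real] at h
  rw [← Set.compl_Iic, probReal_compl_eq_one_sub measurableSet_Iic, h, smul_eq_mul]
  ring

lemma ru_lower (α : ℝ) (hα : α ∈ Set.Ioo (0 : ℝ) 1) (z : ℝ) :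
    stdNormalPDF (VaR (gaussianReal 0 1) α) - z * (1 - α)
      ≤ ∫ x, max (x - z) 0 ∂(gaussianReal 0 1) := by
  rw [← ru_tail2 α hα z, ← integral_indicator measurableSet_Ioi]
  refine integral_mono ((ru_int_id.sub (integrable_const z)).indicator measurableSet_Ioi)
    (ru_int_max z) fun x => ?_
  by_cases hx : x ∈ Set.Ioi (VaR (gaussianReal 0 1) α) <;> simp [Set.indicator, hx]

lemma ru_eq (α : ℝ) (hα : α ∈ Set.Ioo (0 : ℝ) 1) :
    ∫ x, max (x - VaR (gaussianReal 0 1) α) 0 ∂(gaussianReal 0 1) =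
    stdNormalPDF (VaR (gaussianReal 0 1) α) - VaR (gaussianReal 0 1) α * (1 - α) := by
  rw [← ru_tail2 α hα, ← integral_indicator measurableSet_Ioi]
  congr 1
  ext x
  by_cases hx : VaR (gaussianReal 0 1) α < x
  · simp [Set.indicator, hx, hx.le]
  · simp [Set.indicator, hx, not_lt.1 hx]

lemma ru_map (c σ : ℝ) (h : 0 ≤ σ ^ 2) :
    gaussianReal c ⟨σ ^ 2, h⟩ = (gaussianReal 0 1).map (fun x => c + σ * x) := by
  have : (fun x : ℝ => c + σ * x) = (fun x => c + x) ∘ (fun x => σ * x) := rfl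
  rw [this, ← Measure.map_map (by fun_prop) (by fun_prop), gaussianReal_map_const_mul,
    gaussianReal_map_const_add]
  simp
  rfl

lemma ru_int_affine (c σ : ℝ) (hσ : 0 < σ) (h : 0 ≤ σ ^ 2) (z : ℝ) :
    ∫ x, max (x - (c + σ * z)) 0 ∂(gaussianReal c ⟨σ ^ 2, h⟩)
      = σ * ∫ x, max (x - z) 0 ∂(gaussianReal 0 1) := by
  rw [ru_map, integral_map (by fun_prop) (by fun_prop), ← integral_const_mul]
  congr 1
  ext x
  rw [← mul_max_of_nonneg _ _ hσ.le |>.symm]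
  congr 1 <;> ring

lemma ru_VaR (c σ : ℝ) (hσ : 0 < σ) (h : 0 ≤ σ ^ 2) (α : ℝ) (hα : α ∈ Set.Ioo (0 : ℝ) 1) :
    VaR (gaussianReal c ⟨σ ^ 2, h⟩) α = c + σ * VaR (gaussianReal 0 1) α := by
  obtain ⟨hn, hb⟩ := ru_set α hα
  have hm : Monotone (fun x : ℝ => c + σ * x) := fun a b hab => by
    dsimp only; gcongr
  have hcdf : ∀ z, cdf (gaussianReal c ⟨σ ^ 2, h⟩) (c + σ * z) = cdf (gaussianReal 0 1) z := by
    intro z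
    rw [ru_map]
    haveI : IsProbabilityMeasure ((gaussianReal 0 1).map (fun x => c + σ * x)) :=
      Measure.isProbabilityMeasure_map (by fun_prop)
    rw [cdf_eq_real, cdf_eq_real, map_measureReal_apply (by fun_prop) measurableSet_Iic]
    congr 1
    ext x
    simp [hσ]
  have key := hm.map_csInf_of_continuousAt (A := {z : ℝ | α ≤ cdf (gaussianReal 0 1) z})
    (by fun_prop) hn hb
  unfold VaR
  rw [key]
  congr 1
  ext y
  constructor
  · intro hy
    have e : c + σ * ((y - c) / σ) = y := by field_simp; ring
    refine ⟨(y - c) / σ, ?_, e⟩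
    change α ≤ _
    rw [← hcdf, e]
    exact hy
  · rintro ⟨z, hz, rfl⟩
    change α ≤ _
    rw [hcdf]
    exact hz

/-- The Rockafellar–Uryasev infimum for a Gaussian measure equals the CVaR closed form,
and is attained at `z = VaR_α(N(c, σ²)) = c + σ · VaR_α(N(0,1))`. -/
theorem rockafellar_uryasev_gaussian (c σ : ℝ) (hσ : 0 < σ) (α : ℝ)
    (hα : α ∈ Set.Ioo (0 : ℝ) 1) :
    (⨅ z : ℝ, (z + (1 / (1 - α)) *
        ∫ x, max (x - z) 0 ∂(gaussianReal c ⟨σ ^ 2, by positivity⟩)))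
      = c + σ * stdNormalPDF (VaR (gaussianReal 0 1) α) / (1 - α)
    ∧ (VaR (gaussianReal c ⟨σ ^ 2, by positivity⟩) α + (1 / (1 - α)) *
        ∫ x, max (x - VaR (gaussianReal c ⟨σ ^ 2, by positivity⟩) α) 0
          ∂(gaussianReal c ⟨σ ^ 2, by positivity⟩))
      = c + σ * stdNormalPDF (VaR (gaussianReal 0 1) α) / (1 - α)
    ∧ VaR (gaussianReal c ⟨σ ^ 2, by positivity⟩) α
      = c + σ * VaR (gaussianReal 0 1) α := by
  have h1 : 0 < 1 - α := by linarith [hα.2]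
  have hV := ru_VaR c σ hσ (by positivity) α hα
  have hatt : (VaR (gaussianReal c ⟨σ ^ 2, by positivity⟩) α + (1 / (1 - α)) *
        ∫ x, max (x - VaR (gaussianReal c ⟨σ ^ 2, by positivity⟩) α) 0
          ∂(gaussianReal c ⟨σ ^ 2, by positivity⟩))
      = c + σ * stdNormalPDF (VaR (gaussianReal 0 1) α) / (1 - α) := by
    rw [hV, ru_int_affine c σ hσ, ru_eq α hα]
    field_simp
    ring
  have hlow : ∀ z : ℝ, c + σ * stdNormalPDF (VaR (gaussianReal 0 1) α) / (1 - α) ≤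
      z + (1 / (1 - α)) *
        ∫ x, max (x - z) 0 ∂(gaussianReal c ⟨σ ^ 2, by positivity⟩) := by
    intro z
    obtain ⟨w, rfl⟩ : ∃ w, z = c + σ * w := ⟨(z - c) / σ, by field_simp; ring⟩
    rw [ru_int_affine c σ hσ]
    have h2 := mul_le_mul_of_nonneg_left (ru_lower α hα w)
      (by positivity : 0 ≤ 1 / (1 - α) * σ)
    have h3 : 1 / (1 - α) * σ * (stdNormalPDF (VaR (gaussianReal 0 1) α) - w * (1 - α))
        = σ * stdNormalPDF (VaR (gaussianReal 0 1) α) / (1 - α) - σ * w := by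
      field_simp
    rw [h3] at h2
    linarith
  refine ⟨le_antisymm ?_ (le_ciInf hlow), hatt, hV⟩
  rw [← hatt]
  have hb : BddBelow (Set.range fun z : ℝ => z + (1 / (1 - α)) *
        ∫ x, max (x - z) 0 ∂(gaussianReal c ⟨σ ^ 2, by positivity⟩)) := by
    refine ⟨c + σ * stdNormalPDF (VaR (gaussianReal 0 1) α) / (1 - α), ?_⟩
    rintro _ ⟨z, rfl⟩
    exact hlow z
  exact ciInf_le hb (VaR (gaussianReal c ⟨σ ^ 2, by positivity⟩) α)
end
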